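/- Let D ≥ 4 be an even integer, λ = D/2 − 1, and e ∈ ℝ^D with ‖e‖ = 1. Write z = u + iv for points of the open upper half-plane, and let ∂_z = ½(∂_u − i∂_v), ∂_{z̄} = ½(∂_u + i∂_v) be the Wirtinger derivatives, so z − z̄ = 2iv. Let f be a twice continuously differentiable complex-valued function on {z ∈ ℂ : Im z > 0} and define h : ℝ^D ∖ ℝ·e → ℂ by h(x) = f(z(x)) with z(x) = ⟨x, e⟩ + i‖x − ⟨x, e⟩e‖. Then h is twice continuously differentiable and its Euclidean Laplacian Δh = Σ_{j=1}^{D} ∂²h/∂x_j² satisfies, for all x ∈ ℝ^D ∖ ℝ·e, Δh(x) = 4·[ (1/(z − z̄))·∂_z∂_{z̄}((z − z̄)f) + ((1 − λ)/(z − z̄))·(∂_z f − ∂_{z̄} f) ] evaluated at z = z(x); equivalently Δh(x) = (∂_u²f + ∂_v²f + ((D−2)/v)·∂_v f)(z(x)). -/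

import Mathlib

open MeasureTheory RealInnerProductSpace

/-- Directional derivative `∂_u` of a function `ℂ → ℂ` (real derivative in the
direction `1`). -/
noncomputable def pdu (f : ℂ → ℂ) (z : ℂ) : ℂ := fderiv ℝ f z 1

/-- Directional derivative `∂_v` of a function `ℂ → ℂ` (real derivative in the
direction `i`). -/
noncomputable def pdv (f : ℂ → ℂ) (z : ℂ) : ℂ := fderiv ℝ f z Complex.I

/-- The Wirtinger derivative `∂_z = ½(∂_u − i ∂_v)`. -/
noncomputable def wdz (f : ℂ → ℂ) (z : ℂ) : ℂ := (pdu f z - Complex.I * pdv f z) / 2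

/-- The Wirtinger derivative `∂_z̄ = ½(∂_u + i ∂_v)`. -/
noncomputable def wdzbar (f : ℂ → ℂ) (z : ℂ) : ℂ := (pdu f z + Complex.I * pdv f z) / 2

/-- The Euclidean Laplacian `Δh = Σ_j ∂²h/∂x_j²` on `ℝ^D`. -/
noncomputable def lap {D : ℕ} (h : EuclideanSpace ℝ (Fin D) → ℂ)
    (x : EuclideanSpace ℝ (Fin D)) : ℂ :=
  ∑ j : Fin D,
    fderiv ℝ (fun y => fderiv ℝ h y (EuclideanSpace.single j 1)) x
      (EuclideanSpace.single j 1)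

noncomputable def prj {D : ℕ} (e : EuclideanSpace ℝ (Fin D)) :
    EuclideanSpace ℝ (Fin D) →L[ℝ] EuclideanSpace ℝ (Fin D) :=
  ContinuousLinearMap.id ℝ _ - (innerSL ℝ e).smulRight e

lemma prj_apply {D : ℕ} (e x : EuclideanSpace ℝ (Fin D)) :
    prj e x = x - (⟪x, e⟫ : ℝ) • e := by
  simp [prj, real_inner_comm]

lemma prj_inner_e {D : ℕ} (e x : EuclideanSpace ℝ (Fin D)) (he : ‖e‖ = 1) :
    (⟪prj e x, e⟫ : ℝ) = 0 := by
  rw [prj_apply, inner_sub_left, real_inner_smul_left, real_inner_self_eq_norm_sq, he]; ring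

lemma prj_inner_prj {D : ℕ} (e x v : EuclideanSpace ℝ (Fin D)) (he : ‖e‖ = 1) :
    (⟪prj e x, prj e v⟫ : ℝ) = ⟪prj e x, v⟫ := by
  rw [prj_apply e v, inner_sub_right, real_inner_smul_right, prj_inner_e e x he]; ring

lemma norm_prj_deriv {D : ℕ} (e x : EuclideanSpace ℝ (Fin D)) (he : ‖e‖ = 1)
    (hx : prj e x ≠ 0) :
    HasFDerivAt (fun y => ‖prj e y‖) (‖prj e x‖⁻¹ • innerSL ℝ (prj e x)) x := by
  have h1 := ((prj e).hasFDerivAt (x := x)).norm_sq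
  have h2 := h1.sqrt (by positivity)
  simp only [Real.sqrt_sq (norm_nonneg _)] at h2
  refine h2.congr_fderiv ?_
  ext v
  have := prj_inner_prj e x v he
  simp only [ContinuousLinearMap.smul_apply, ContinuousLinearMap.comp_apply, innerSL_apply_apply, this, smul_eq_mul]
  have : ‖prj e x‖ ≠ 0 := by simpa using hx
  field_simp
  simp [this]

noncomputable def zfn {D : ℕ} (e x : EuclideanSpace ℝ (Fin D)) : ℂ :=
  ((⟪x, e⟫ : ℝ) : ℂ) + ((‖prj e x‖ : ℝ) : ℂ) * Complex.I

lemma zfn_contDiffAt {D : ℕ} (e x : EuclideanSpace ℝ (Fin D)) (hx : prj e x ≠ 0) :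
    ContDiffAt ℝ 2 (zfn e) x := by
  unfold zfn
  have h1 : ContDiffAt ℝ 2 (fun y => ‖prj e y‖) x :=
    ((prj e).contDiff.contDiffAt).norm ℝ hx
  have h2 : ContDiffAt ℝ 2 (fun y : EuclideanSpace ℝ (Fin D) => (⟪y, e⟫ : ℝ)) x :=
    contDiffAt_id.inner ℝ contDiffAt_const
  exact (Complex.ofRealCLM.contDiff.contDiffAt.comp x h2).add
    ((Complex.ofRealCLM.contDiff.contDiffAt.comp x h1).mul contDiffAt_const)

lemma zfn_fderiv {D : ℕ} (e x v : EuclideanSpace ℝ (Fin D)) (he : ‖e‖ = 1) (hx : prj e x ≠ 0) :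
    fderiv ℝ (zfn e) x v =
      (⟪v, e⟫ : ℝ) • (1 : ℂ) + (⟪prj e x, v⟫ / ‖prj e x‖ : ℝ) • Complex.I := by
  have h1 := norm_prj_deriv e x he hx
  have h2 : HasFDerivAt (fun y : EuclideanSpace ℝ (Fin D) => (⟪y, e⟫ : ℝ)) (innerSL ℝ e) x := by
    have := (innerSL ℝ e).hasFDerivAt (x := x)
    exact this.congr_of_eventuallyEq (.of_forall fun y => by simp [real_inner_comm])
  have h3 := (Complex.ofRealCLM.hasFDerivAt.comp x h2).add
    ((Complex.ofRealCLM.hasFDerivAt.comp x h1).mul_const Complex.I)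
  have h4 : HasFDerivAt (zfn e) _ x := h3
  rw [h4.fderiv]
  simp [real_inner_comm e v]
  ring

lemma pd_differentiableAt (f : ℂ → ℂ) (z c : ℂ) (hf : ContDiffAt ℝ 2 f z) :
    DifferentiableAt ℝ (fun w => fderiv ℝ f w c) z := by
  have : ContDiffAt ℝ 1 (fderiv ℝ f) z := hf.fderiv_right (by norm_num)
  exact (this.differentiableAt (by norm_num)).clm_apply (differentiableAt_const c)

lemma hcomp_fderiv {D : ℕ} (e x v : EuclideanSpace ℝ (Fin D)) (he : ‖e‖ = 1) (hx : prj e x ≠ 0)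
    (f : ℂ → ℂ) (hf : DifferentiableAt ℝ f (zfn e x)) :
    fderiv ℝ (fun y => f (zfn e y)) x v =
      (⟪v, e⟫ : ℝ) • pdu f (zfn e x) + (⟪prj e x, v⟫ / ‖prj e x‖ : ℝ) • pdv f (zfn e x) := by
  have h1 : HasFDerivAt (fun y => f (zfn e y)) _ x := hf.hasFDerivAt.comp x
    ((zfn_contDiffAt e x hx).differentiableAt (by norm_num)).hasFDerivAt
  rw [h1.fderiv, ContinuousLinearMap.comp_apply, zfn_fderiv e x v he hx, map_add, map_smul,
    map_smul]
  rfl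

lemma zfn_im {D : ℕ} (e x : EuclideanSpace ℝ (Fin D)) : (zfn e x).im = ‖prj e x‖ := by
  simp [zfn]

lemma uhp_cda (f : ℂ → ℂ) (hf : ContDiffOn ℝ 2 f {z : ℂ | 0 < z.im}) (z : ℂ) (hz : 0 < z.im) :
    ContDiffAt ℝ 2 f z :=
  hf.contDiffAt ((isOpen_lt continuous_const Complex.continuous_im).mem_nhds hz)

lemma second_fderiv {D : ℕ} (e x v : EuclideanSpace ℝ (Fin D)) (he : ‖e‖ = 1)
    (hx : prj e x ≠ 0) (f : ℂ → ℂ) (hf : ContDiffOn ℝ 2 f {z : ℂ | 0 < z.im}) :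
    fderiv ℝ (fun y => fderiv ℝ (fun y => f (zfn e y)) y v) x v =
      ((⟪v, e⟫ * ⟪v, e⟫ : ℝ) : ℂ) * pdu (pdu f) (zfn e x)
      + ((⟪v, e⟫ * ⟪prj e x, v⟫ : ℝ) : ℂ) *
        (((‖prj e x‖⁻¹ : ℝ) : ℂ) * (pdv (pdu f) (zfn e x) + pdu (pdv f) (zfn e x)))
      + ((⟪prj e x, v⟫ * ⟪prj e x, v⟫ : ℝ) : ℂ) *
        (((‖prj e x‖⁻¹ ^ 2 : ℝ) : ℂ) * pdv (pdv f) (zfn e x)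
          - ((‖prj e x‖⁻¹ ^ 3 : ℝ) : ℂ) * pdv f (zfn e x))
      + ((⟪v, v⟫ - ⟪v, e⟫ * ⟪v, e⟫ : ℝ) : ℂ) * (((‖prj e x‖⁻¹ : ℝ) : ℂ) * pdv f (zfn e x)) := by
  have hpos : ∀ y, prj e y ≠ 0 → 0 < (zfn e y).im := fun y hy => by
    rw [zfn_im]; exact norm_pos_iff.2 hy
  have hev : ∀ᶠ y in nhds x, prj e y ≠ 0 := (prj e).continuous.continuousAt.eventually_ne hx
  have hE : (fun y => fderiv ℝ (fun y => f (zfn e y)) y v) =ᶠ[nhds x] fun y =>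
      (⟪v, e⟫ : ℝ) • pdu f (zfn e y) + (⟪prj e y, v⟫ * ‖prj e y‖⁻¹ : ℝ) • pdv f (zfn e y) := by
    filter_upwards [hev] with y hy
    rw [hcomp_fderiv e y v he hy f
      ((uhp_cda f hf _ (hpos y hy)).differentiableAt (by norm_num)), div_eq_mul_inv]
  rw [hE.fderiv_eq]
  have hfx := uhp_cda f hf _ (hpos x hx)
  have hu : DifferentiableAt ℝ (pdu f) (zfn e x) := pd_differentiableAt f _ 1 hfx
  have hv : DifferentiableAt ℝ (pdv f) (zfn e x) := pd_differentiableAt f _ Complex.I hfx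
  have hz := (zfn_contDiffAt e x hx).differentiableAt (by norm_num)
  have hn : ‖prj e x‖ ≠ 0 := by simpa using hx
  have k1 : HasFDerivAt (fun y => pdu f (zfn e y)) _ x := (hu.comp x hz).hasFDerivAt
  have k2 : HasFDerivAt (fun y => pdv f (zfn e y)) _ x := (hv.comp x hz).hasFDerivAt
  have k3 : HasFDerivAt (fun y => (⟪prj e y, v⟫ : ℝ)) ((innerSL ℝ v).comp (prj e)) x := by
    have := ((innerSL ℝ v).comp (prj e)).hasFDerivAt (x := x)
    exact this.congr_of_eventuallyEq (.of_forall fun y => by simp [real_inner_comm])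
  have k4 := (hasDerivAt_inv hn).comp_hasFDerivAt x (norm_prj_deriv e x he hx)
  have k5 := (k1.const_smul (⟪v, e⟫ : ℝ)).add ((k3.mul k4).smul k2)
  have e1 : (⟪v, prj e v⟫ : ℝ) = ⟪v, v⟫ - ⟪v, e⟫ * ⟪v, e⟫ := by
    rw [prj_apply, inner_sub_right, real_inner_smul_right]
  have a1 := hcomp_fderiv e x v he hx (pdu f) hu
  have a2 := hcomp_fderiv e x v he hx (pdv f) hv
  have a1' : fderiv ℝ (pdu f ∘ zfn e) x v = _ := a1
  have a2' : fderiv ℝ (pdv f ∘ zfn e) x v = _ := a2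
  refine (congrArg (fun L => L v) k5.fderiv).trans ?_
  simp [a1', a2', e1]
  have hn' : (‖prj e x‖ : ℂ) ≠ 0 := by exact_mod_cast hn
  field_simp
  ring

lemma sum_inner_single {D : ℕ} (a b : EuclideanSpace ℝ (Fin D)) :
    ∑ j : Fin D, (⟪a, EuclideanSpace.single j 1⟫ * ⟪b, EuclideanSpace.single j 1⟫ : ℝ)
      = ⟪a, b⟫ := by
  simp [PiLp.inner_apply, mul_comm]

lemma lap_eq {D : ℕ} (e x : EuclideanSpace ℝ (Fin D)) (he : ‖e‖ = 1)
    (hx : prj e x ≠ 0) (f : ℂ → ℂ) (hf : ContDiffOn ℝ 2 f {z : ℂ | 0 < z.im}) :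
    lap (fun y => f (zfn e y)) x = pdu (pdu f) (zfn e x) + pdv (pdv f) (zfn e x)
          + (((((D : ℝ) - 2) / (zfn e x).im : ℝ)) : ℂ) * pdv f (zfn e x) := by
  unfold lap
  have hn : ‖prj e x‖ ≠ 0 := by simpa using hx
  have hn' : (‖prj e x‖ : ℂ) ≠ 0 := by exact_mod_cast hn
  simp only [second_fderiv e x _ he hx f hf, Finset.sum_add_distrib, ← Finset.sum_mul,
    ← Complex.ofReal_sum, Finset.sum_sub_distrib]
  simp only [real_inner_comm e, sum_inner_single]
  have s1 : ∑ j : Fin D, (⟪EuclideanSpace.single j (1:ℝ), EuclideanSpace.single j (1:ℝ)⟫ : ℝ) = D := by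
    simp
  rw [s1, real_inner_comm (prj e x) e, prj_inner_e e x he, real_inner_self_eq_norm_sq,
    real_inner_self_eq_norm_sq, he, zfn_im]
  push_cast
  field_simp
  ring

lemma wirt (f : ℂ → ℂ) (hf : ContDiffOn ℝ 2 f {z : ℂ | 0 < z.im}) (z : ℂ) (hz : 0 < z.im) :
    wdz (fun w => wdzbar (fun w' => (w' - (starRingEnd ℂ) w') * f w') w) z =
      - wdz f z + wdzbar f z + (z - (starRingEnd ℂ) z) * ((pdu (pdu f) z + pdv (pdv f) z) / 4) := by
  have hev : ∀ᶠ w in nhds z, 0 < w.im :=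
    (isOpen_lt continuous_const Complex.continuous_im).mem_nhds hz
  let C : ℂ →L[ℝ] ℂ := ContinuousLinearMap.id ℝ ℂ - (Complex.conjCLE : ℂ →L[ℝ] ℂ)
  have hC : ∀ w, HasFDerivAt (fun w' : ℂ => w' - (starRingEnd ℂ) w') C w := fun w =>
    C.hasFDerivAt
  have hC1 : C 1 = 0 := by simp [C]
  have hCI : C Complex.I = 2 * Complex.I := by simp [C]; ring
  have hE : (fun w => wdzbar (fun w' => (w' - (starRingEnd ℂ) w') * f w') w) =ᶠ[nhds z]
      fun w => - f w + (w - (starRingEnd ℂ) w) * ((pdu f w + Complex.I * pdv f w) * (1 / 2)) := by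
    filter_upwards [hev] with w hw
    have hd := ((uhp_cda f hf w hw).differentiableAt (by norm_num)).hasFDerivAt
    have := ((hC w).mul hd).fderiv
    have : fderiv ℝ (fun w' => (w' - (starRingEnd ℂ) w') * f w') w = _ := this
    unfold wdzbar pdu pdv
    rw [this]
    simp [hC1, hCI]
    linear_combination f w * Complex.I_sq
  have hfz := uhp_cda f hf z hz
  have hd := (hfz.differentiableAt (by norm_num)).hasFDerivAt
  have hu : HasFDerivAt (pdu f) _ z := (pd_differentiableAt f z 1 hfz).hasFDerivAt
  have hv : HasFDerivAt (pdv f) _ z := (pd_differentiableAt f z Complex.I hfz).hasFDerivAt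
  have hk := (hd.neg.add ((hC z).mul ((hu.add (hv.const_mul Complex.I)).mul_const (1/2)))).fderiv
  have hk' : fderiv ℝ (fun w => - f w + (w - (starRingEnd ℂ) w) *
    ((pdu f w + Complex.I * pdv f w) * (1 / 2))) z = _ := hk
  have hsym : pdv (pdu f) z = pdu (pdv f) z := by
    have h2 : DifferentiableAt ℝ (fderiv ℝ f) z :=
      (hfz.fderiv_right (m := 1) (by norm_num)).differentiableAt (by norm_num)
    have hs := hfz.isSymmSndFDerivAt (by simp) 1 Complex.I
    have key : ∀ c d : ℂ, fderiv ℝ (fun w => fderiv ℝ f w c) z d = fderiv ℝ (fderiv ℝ f) z d c := by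
      intro c d
      rw [fderiv_clm_apply h2 (differentiableAt_const c)]
      simp
    change fderiv ℝ (fun w => fderiv ℝ f w 1) z Complex.I
      = fderiv ℝ (fun w => fderiv ℝ f w Complex.I) z 1
    rw [key, key]; exact hs.symm
  have q1 : fderiv ℝ (fun w => fderiv ℝ f w 1) z 1 = pdu (pdu f) z := rfl
  have q2 : fderiv ℝ (fun w => fderiv ℝ f w 1) z Complex.I = pdv (pdu f) z := rfl
  have q3 : fderiv ℝ (fun w => fderiv ℝ f w Complex.I) z 1 = pdu (pdv f) z := rfl
  have q4 : fderiv ℝ (fun w => fderiv ℝ f w Complex.I) z Complex.I = pdv (pdv f) z := rfl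
  have w1 : fderiv ℝ f z 1 = pdu f z := rfl
  have w2 : fderiv ℝ f z Complex.I = pdv f z := rfl
  rw [wdz, pdu, pdv, hE.fderiv_eq, hk']
  simp [hC1, hCI, q1, q2, q3, q4, w1, w2, hsym]
  unfold wdz wdzbar
  ring_nf
  simp only [Complex.I_sq, Complex.I_pow_three]
  ring

/-- The effective Laplace equation: the Euclidean Laplacian of
`h(x) = f(z(x))`, `z(x) = ⟨x,e⟩ + i‖x − ⟨x,e⟩e‖`, in terms of the complex
variable `z`, for `f` twice continuously differentiable on the upper half
plane. -/
theorem effective_laplace_equation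
    (D : ℕ) (hD : 4 ≤ D) (hDeven : Even D)
    (e : EuclideanSpace ℝ (Fin D)) (he : ‖e‖ = 1)
    (f : ℂ → ℂ) (hf : ContDiffOn ℝ 2 f {z : ℂ | 0 < z.im}) :
    let lam : ℝ := (D : ℝ) / 2 - 1
    let zf : EuclideanSpace ℝ (Fin D) → ℂ :=
      fun x => ((⟪x, e⟫ : ℝ) : ℂ) + (‖x - (⟪x, e⟫ : ℝ) • e‖ : ℝ) * Complex.I
    let h : EuclideanSpace ℝ (Fin D) → ℂ := fun x => f (zf x)
    let S : Set (EuclideanSpace ℝ (Fin D)) := {x | ∀ t : ℝ, x ≠ t • e}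
    ContDiffOn ℝ 2 h S ∧
    ∀ x ∈ S,
      lap h x =
        4 * ((1 / (zf x - (starRingEnd ℂ) (zf x))) *
              wdz (fun w => wdzbar (fun w' => (w' - (starRingEnd ℂ) w') * f w') w) (zf x)
            + (((1 - lam : ℝ) : ℂ) / (zf x - (starRingEnd ℂ) (zf x))) *
              (wdz f (zf x) - wdzbar f (zf x))) ∧
      lap h x =
        pdu (fun w => pdu f w) (zf x) + pdv (fun w => pdv f w) (zf x)
          + (((((D : ℝ) - 2) / (zf x).im : ℝ)) : ℂ) * pdv f (zf x) := by
  intro lam zf h S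
  have hz : zf = zfn e := by
    funext x; simp only [zf, zfn, prj_apply]
  have hS : ∀ x ∈ S, prj e x ≠ 0 := by
    intro x hx h0
    rw [prj_apply, sub_eq_zero] at h0
    exact hx _ h0
  have hpos : ∀ x ∈ S, 0 < (zfn e x).im := fun y hy => by
    rw [zfn_im]; exact norm_pos_iff.2 (hS y hy)
  have hh : h = fun x => f (zfn e x) := by simp only [h, hz]
  rw [hh, hz]
  refine ⟨fun x hx => ((uhp_cda f hf _ (hpos x hx)).comp x
    (zfn_contDiffAt e x (hS x hx))).contDiffWithinAt, fun x hx => ?_⟩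
  have hL := lap_eq e x he (hS x hx) f hf
  refine ⟨?_, hL⟩
  rw [hL, wirt f hf _ (hpos x hx), Complex.sub_conj]
  have hne : ((zfn e x).im : ℂ) ≠ 0 := by exact_mod_cast (hpos x hx).ne'
  unfold wdz wdzbar
  simp only [lam]
  push_cast
  field_simp
  ring_nf
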